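/- Let φ be a non-degenerate Schwartz function on ℝ with supp φ̂ ⊆ (0,1). Fix Φ ∈ 𝓢(ℝ) with supp Φ̂ ⊆ [−2,2] and Φ̂ ≡ 1 on [−3/2, 3/2], and let ψ_j (j ∈ ℤ) be the associated Littlewood–Paley blocks. Set h(u) = e^{2πiu} 𝟙_{[0,∞)}(u), f₀ = h∗ψ₀, and for m ≤ −2, φ_m(x) = 2^m e^{2πi(1+2^m)x} φ(2^m x). Then: (a) f₀∗ψ_j = 0 whenever |j| ≥ 2, and consequently for every s ≥ 0 and 0 < q ≤ ∞ the homogeneous Besov quasinorm ( Σ_{j∈ℤ} (2^{js} ‖f₀∗ψ_j‖_{L^∞})^q )^{1/q} is finite; (b) sup_{x∈ℝ} ( Σ_{m ≤ −2} |((f₀∗φ_m)∗ψ₀)(x)|² )^{1/2} = ∞. Hence the Rubio de Francia operator without rotations associated with the collection {[1+2^m, 1+2^{m+1}]}_{m ≤ −2} is not bounded on the homogeneous Besov space Ḃ^s_{∞q} for any s ≥ 0 and 0 < q ≤ ∞. -/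

import Mathlib

open MeasureTheory Real Set Function
open scoped FourierTransform ENNReal NNReal

/-- `e2pi t = e^{2πit}`. -/
noncomputable def e2pi (t : ℝ) : ℂ := Complex.exp (2 * (Real.pi : ℂ) * Complex.I * (t : ℂ))

/-- Convolution of two functions on `ℝ`. -/
noncomputable def conv (f g : ℝ → ℂ) (x : ℝ) : ℂ := ∫ t, f t * g (x - t)

/-- The modulated Heaviside function `h(u) = e^{2πiu} 𝟙_{[0,∞)}(u)`. -/
noncomputable def heav : ℝ → ℂ := Set.indicator (Set.Ici (0:ℝ)) fun u => e2pi u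

/-- The function `φ_m` associated with the dyadic interval `[1+2^m, 1+2^{m+1}]`:
`φ_m(x) = 2^m e^{2πi(1+2^m)x} φ(2^m x)`. -/
noncomputable def phimDyadic (φ : ℝ → ℂ) (m : ℤ) (x : ℝ) : ℂ :=
  (((2:ℝ) ^ m : ℝ) : ℂ) * e2pi ((1 + (2:ℝ) ^ m) * x) * φ ((2:ℝ) ^ m * x)

/-- Littlewood–Paley block `ψ_j`, whose Fourier transform is `ξ ↦ 𝓕Φ(2^{-j}ξ) - 𝓕Φ(2^{-j+1}ξ)`. -/
noncomputable def psi (Φ : ℝ → ℂ) (j : ℤ) (x : ℝ) : ℂ :=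
  (((2:ℝ) ^ j : ℝ) : ℂ) * Φ ((2:ℝ) ^ j * x) - (((2:ℝ) ^ (j-1) : ℝ) : ℂ) * Φ ((2:ℝ) ^ (j-1) * x)

/-- The `ℓ^q` (quasi)norm of a sequence indexed by `ℤ`, with values in `[0,∞]`;
for `q = ∞` it is the supremum. -/
noncomputable def lqNorm (q : ℝ≥0∞) (F : ℤ → ℝ≥0∞) : ℝ≥0∞ :=
  if q = ∞ then ⨆ j, F j else (∑' j, F j ^ q.toReal) ^ (1 / q.toReal)

/-- Continuous, integrable and bounded functions. -/
structure Nice (f : ℝ → ℂ) : Prop where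
  cont : Continuous f
  int : Integrable f
  bdd : ∃ C, ∀ x, ‖f x‖ ≤ C

lemma conv_eq_convolution (f g : ℝ → ℂ) :
    conv f g = MeasureTheory.convolution f g (ContinuousLinearMap.mul ℂ ℂ) volume := rfl

lemma conv_bound {f g : ℝ → ℂ} {C : ℝ} (hf : ∀ x, ‖f x‖ ≤ C) (hg : Integrable g) (x : ℝ) :
    ‖conv f g x‖ ≤ C * ∫ t, ‖g t‖ := by
  have h1 : ‖conv f g x‖ ≤ ∫ t, C * ‖g (x - t)‖ := by
    refine norm_integral_le_of_norm_le ((hg.comp_sub_left x).norm.const_mul C) ?_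
    filter_upwards with t
    rw [norm_mul]
    gcongr
    exact hf t
  refine h1.trans_eq ?_
  rw [integral_const_mul, integral_sub_left_eq_self (fun t => ‖g t‖)]

lemma Nice.conv {f g : ℝ → ℂ} (hf : Nice f) (hg : Nice g) : Nice (conv f g) := by
  obtain ⟨C, hC⟩ := hf.bdd
  obtain ⟨D, hD⟩ := hg.bdd
  refine ⟨?_, ?_, _, fun x => conv_bound hC hg.int x⟩
  · rw [conv_eq_convolution]
    refine BddAbove.continuous_convolution_right_of_integrable _ ⟨D, ?_⟩ hf.int hg.cont
    rintro _ ⟨x, rfl⟩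
    exact hD x
  · rw [conv_eq_convolution]
    exact hf.int.integrable_convolution _ hg.int

lemma fourier_conv {f g : ℝ → ℂ} (hf : Integrable f) (hg : Integrable g) (ξ : ℝ) :
    𝓕 (conv f g) ξ = 𝓕 f ξ * 𝓕 g ξ := by
  rw [conv_eq_convolution]
  exact Real.fourier_mul_convolution_eq hf hg ξ

lemma conv_assoc_of_bdd {h f g : ℝ → ℂ} {C : ℝ} (hm : Measurable h) (hC : ∀ x, ‖h x‖ ≤ C)
    (hf : Nice f) (hg : Nice g) : conv (conv h f) g = conv h (conv f g) := by
  funext x₀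
  simp only [conv_eq_convolution]
  obtain ⟨D, hD⟩ := hg.bdd
  refine MeasureTheory.convolution_assoc' _ _ _ _ (fun x y z => by simp [mul_assoc]) ?_ ?_ ?_
  · filter_upwards with y
    exact (hf.int.comp_sub_left y).bdd_mul (c := C) hm.aestronglyMeasurable (by filter_upwards with t using hC t)
  · filter_upwards with y
    exact hf.int.mul_bdd (c := D)
      (hg.cont.comp (by fun_prop : Continuous fun t => y - t)).aestronglyMeasurable
      (by filter_upwards with t using hD _)
  · have h1 := ((hg.int.comp_sub_left x₀).convolution_integrand (ContinuousLinearMap.mul ℂ ℂ)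
      (μ := volume) (ν := volume) hf.int.comp_neg).swap
    have h2 : Integrable (fun p : ℝ × ℝ => f (p.1 - p.2) * g (x₀ - p.1))
        (volume.prod volume) := by
      refine h1.congr ?_
      filter_upwards with p
      simp [mul_comm]
    exact h2.bdd_mul (c := C) (hm.comp measurable_snd).aestronglyMeasurable
      (by filter_upwards with t using hC _)

lemma eq_of_fourier_eq {f g : ℝ → ℂ} (hf : Nice f) (hg : Nice g)
    (h : ∀ ξ, 𝓕 f ξ = 𝓕 g ξ) : f = g := by
  have h0 : 𝓕 (fun x => f x - g x) = fun _ => (0:ℂ) := by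
    funext ξ
    have := h ξ
    rw [Real.fourier_eq, Real.fourier_eq] at this
    rw [Real.fourier_eq]
    simp_rw [smul_sub]
    rw [integral_sub, this, sub_self]
    · exact (Real.fourierIntegral_convergent_iff ξ).2 hf.int
    · exact (Real.fourierIntegral_convergent_iff ξ).2 hg.int
  have h1 := Continuous.fourierInv_fourier_eq (f := fun x => f x - g x) (hf.cont.sub hg.cont)
    (hf.int.sub hg.int) (by rw [h0]; exact integrable_zero _ _ _)
  funext x
  have h2 := congrFun h1 x
  rw [h0, Real.fourierInv_eq] at h2
  simp at h2
  exact sub_eq_zero.1 h2.symm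

lemma norm_e2pi (t : ℝ) : ‖e2pi t‖ = 1 := by
  rw [e2pi, Complex.norm_exp]
  simp

lemma continuous_e2pi : Continuous e2pi := by unfold e2pi; fun_prop

lemma e2pi_add (s t : ℝ) : e2pi (s + t) = e2pi s * e2pi t := by
  unfold e2pi; rw [← Complex.exp_add]; congr 1; push_cast; ring

lemma measurable_heav : Measurable heav :=
  continuous_e2pi.measurable.indicator measurableSet_Ici

lemma norm_heav_le (t : ℝ) : ‖heav t‖ ≤ 1 := by
  unfold heav
  refine (norm_indicator_le_norm_self _ _).trans (norm_e2pi t).le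

lemma nice_schwartz (f : SchwartzMap ℝ ℂ) : Nice f :=
  ⟨f.continuous, f.integrable, _, fun x => f.norm_le_seminorm ℝ x⟩

/-- modulated dilate -/
noncomputable def modDil (a b : ℝ) (f : ℝ → ℂ) (x : ℝ) : ℂ := (a : ℂ) * e2pi (b * x) * f (a * x)

lemma nice_modDil {a : ℝ} (ha : 0 < a) (b : ℝ) {f : ℝ → ℂ} (hf : Nice f) :
    Nice (modDil a b f) := by
  obtain ⟨C, hC⟩ := hf.bdd
  have hc : Continuous fun x => (a : ℂ) * e2pi (b * x) :=
    continuous_const.mul (continuous_e2pi.comp (by fun_prop))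
  have hn : ∀ x, ‖(a : ℂ) * e2pi (b * x)‖ = a := fun x => by
    rw [norm_mul, norm_e2pi]; simp [abs_of_pos ha]
  refine ⟨hc.mul (hf.cont.comp (by fun_prop)), ?_, a * C, fun x => ?_⟩
  · exact (hf.int.comp_mul_left' ha.ne').bdd_mul (c := a) hc.aestronglyMeasurable
      (by filter_upwards with x using (hn x).le)
  · rw [modDil, norm_mul, hn]
    gcongr
    exact hC _

lemma fourier_modDil {a : ℝ} (ha : 0 < a) (b : ℝ) (f : ℝ → ℂ) (ξ : ℝ) :
    𝓕 (modDil a b f) ξ = 𝓕 f ((ξ - b) / a) := by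
  rw [Real.fourier_real_eq_integral_exp_smul, Real.fourier_real_eq_integral_exp_smul]
  have h := Measure.integral_comp_mul_left
    (fun v : ℝ => Complex.exp (↑(-2 * π * v * ((ξ - b) / a)) * Complex.I) • f v) a
  have h2 : ∀ v : ℝ, Complex.exp (↑(-2 * π * v * ξ) * Complex.I) • modDil a b f v =
      (a : ℂ) * (Complex.exp (↑(-2 * π * (a * v) * ((ξ - b) / a)) * Complex.I) • f (a * v)) := by
    intro v
    have : -2 * π * (a * v) * ((ξ - b) / a) = -2 * π * v * ξ + 2 * π * (b * v) := by
      field_simp; ring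
    rw [this, modDil, e2pi]
    have e : Complex.exp (((-2 * π * v * ξ + 2 * π * (b * v) : ℝ) : ℂ) * Complex.I) =
      Complex.exp (((-2 * π * v * ξ : ℝ) : ℂ) * Complex.I) *
        Complex.exp (2 * (π : ℂ) * Complex.I * ((b * v : ℝ) : ℂ)) := by
      rw [← Complex.exp_add]; congr 1; push_cast; ring
    rw [e]
    simp only [smul_eq_mul]
    ring
  simp_rw [h2]
  rw [integral_const_mul, h, abs_of_pos (inv_pos.2 ha), Complex.real_smul, ← mul_assoc]
  rw [← Complex.ofReal_mul, mul_inv_cancel₀ ha.ne']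
  simp

lemma phimDyadic_eq (φ : ℝ → ℂ) (m : ℤ) :
    phimDyadic φ m = modDil ((2:ℝ) ^ m) (1 + (2:ℝ) ^ m) φ := rfl

lemma psi_eq (Φ : ℝ → ℂ) (j : ℤ) :
    psi Φ j = fun x => modDil ((2:ℝ) ^ j) 0 Φ x - modDil ((2:ℝ) ^ (j-1)) 0 Φ x := by
  funext x
  simp [psi, modDil, e2pi]

lemma two_zpow_pos (j : ℤ) : (0:ℝ) < 2 ^ j := by positivity

lemma nice_psi (Φ : SchwartzMap ℝ ℂ) (j : ℤ) : Nice (psi Φ j) := by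
  have h1 := nice_modDil (two_zpow_pos j) 0 (nice_schwartz Φ)
  have h2 := nice_modDil (two_zpow_pos (j-1)) 0 (nice_schwartz Φ)
  obtain ⟨C, hC⟩ := h1.bdd
  obtain ⟨D, hD⟩ := h2.bdd
  rw [psi_eq]
  exact ⟨h1.cont.sub h2.cont, h1.int.sub h2.int, C + D,
    fun x => (norm_sub_le _ _).trans (add_le_add (hC x) (hD x))⟩

lemma fourier_psi (Φ : SchwartzMap ℝ ℂ) (j : ℤ) (ξ : ℝ) :
    𝓕 (psi Φ j) ξ = 𝓕 ⇑Φ (ξ / 2 ^ j) - 𝓕 ⇑Φ (ξ / 2 ^ (j - 1)) := by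
  have h1 := nice_modDil (two_zpow_pos j) 0 (nice_schwartz Φ)
  have h2 := nice_modDil (two_zpow_pos (j-1)) 0 (nice_schwartz Φ)
  have e1 := fourier_modDil (two_zpow_pos j) 0 Φ ξ
  have e2 := fourier_modDil (two_zpow_pos (j-1)) 0 Φ ξ
  rw [sub_zero] at e1 e2
  rw [← e1, ← e2, psi_eq]
  simp only [Real.fourier_eq]
  simp_rw [smul_sub]
  rw [integral_sub]
  · exact (Real.fourierIntegral_convergent_iff ξ).2 h1.int
  · exact (Real.fourierIntegral_convergent_iff ξ).2 h2.int

lemma fourier_psi_eq_zero (Φ : SchwartzMap ℝ ℂ)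
    (hΦsupp : Function.support (𝓕 ⇑Φ) ⊆ Set.Icc (-2) 2)
    (hΦone : ∀ ξ ∈ Set.Icc (-(3/2) : ℝ) (3/2), 𝓕 ⇑Φ ξ = 1) (j : ℤ) (ξ : ℝ)
    (h : |ξ| ≤ 3/4 * 2 ^ j ∨ 2 * 2 ^ j < |ξ|) : 𝓕 (psi Φ j) ξ = 0 := by
  have hp := two_zpow_pos j
  have hz : ∀ η : ℝ, 2 < |η| → 𝓕 ⇑Φ η = 0 := by
    intro η hη
    by_contra hne
    exact absurd (abs_le.2 (hΦsupp hne)) (not_le.2 hη)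
  have ho : ∀ η : ℝ, |η| ≤ 3/2 → 𝓕 ⇑Φ η = 1 := fun η hη => hΦone η (abs_le.1 hη)
  have e : ξ / 2 ^ (j - 1) = 2 * (ξ / 2 ^ j) := by
    rw [zpow_sub_one₀ (two_ne_zero)]; field_simp
  have ea : |ξ / 2 ^ j| = |ξ| / 2 ^ j := by rw [abs_div, abs_of_pos hp]
  have ea2 : |2 * (ξ / 2 ^ j)| = 2 * (|ξ| / 2 ^ j) := by rw [abs_mul, ea]; simp
  rw [fourier_psi, e]
  rcases h with h | h
  · have h' : |ξ| / 2 ^ j ≤ 3/4 := (div_le_iff₀ hp).2 h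
    rw [ho _ (by rw [ea]; linarith), ho _ (by rw [ea2]; linarith), sub_self]
  · have h' : 2 < |ξ| / 2 ^ j := (lt_div_iff₀ hp).2 h
    rw [hz _ (by rw [ea]; linarith), hz _ (by rw [ea2]; linarith), sub_self]

lemma fourier_psi_zero_eq_one (Φ : SchwartzMap ℝ ℂ)
    (hΦsupp : Function.support (𝓕 ⇑Φ) ⊆ Set.Icc (-2) 2)
    (hΦone : ∀ ξ ∈ Set.Icc (-(3/2) : ℝ) (3/2), 𝓕 ⇑Φ ξ = 1) (ξ : ℝ)
    (h : ξ ∈ Set.Ioo 1 (3/2 : ℝ)) : 𝓕 (psi Φ 0) ξ = 1 := by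
  have h1 : 𝓕 ⇑Φ (2 * ξ) = 0 := by
    by_contra hne
    have := (hΦsupp hne).2
    linarith [h.1]
  have e : ξ / 2 ^ (-1 : ℤ) = 2 * ξ := by rw [zpow_neg_one]; field_simp
  rw [fourier_psi, zero_sub, e, zpow_zero, div_one, h1, hΦone ξ ⟨by linarith [h.1], h.2.le⟩, sub_zero]

lemma conv_psi_psi_eq_zero (Φ : SchwartzMap ℝ ℂ)
    (hΦsupp : Function.support (𝓕 ⇑Φ) ⊆ Set.Icc (-2) 2)
    (hΦone : ∀ ξ ∈ Set.Icc (-(3/2) : ℝ) (3/2), 𝓕 ⇑Φ ξ = 1) (j : ℤ) (hj : 2 ≤ |j|) :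
    conv (psi Φ 0) (psi Φ j) = fun _ => 0 := by
  refine eq_of_fourier_eq ((nice_psi Φ 0).conv (nice_psi Φ j))
    ⟨continuous_const, integrable_zero _ _ _, 0, by simp⟩ fun ξ => ?_
  have hr : 𝓕 (fun _ : ℝ => (0:ℂ)) ξ = 0 := by rw [Real.fourier_eq]; simp
  rw [fourier_conv (nice_psi Φ 0).int (nice_psi Φ j).int, hr]
  by_cases h0 : |ξ| ≤ 3/4 * 2 ^ (0:ℤ) ∨ 2 * 2 ^ (0:ℤ) < |ξ|
  · rw [fourier_psi_eq_zero Φ hΦsupp hΦone 0 ξ h0, zero_mul]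
  · push Not at h0
    rw [zpow_zero] at h0
    rw [fourier_psi_eq_zero Φ hΦsupp hΦone j ξ, mul_zero]
    rcases le_abs.1 hj with hj | hj
    · left
      have : (2:ℝ) ^ (2:ℤ) ≤ 2 ^ j := zpow_le_zpow_right₀ (by norm_num) hj
      norm_num at this
      linarith [h0.2]
    · right
      have : (2:ℝ) ^ j ≤ 2 ^ (-2:ℤ) := zpow_le_zpow_right₀ (by norm_num) (by linarith)
      norm_num at this
      linarith [h0.1]

lemma nice_phim (φ : SchwartzMap ℝ ℂ) (m : ℤ) : Nice (phimDyadic φ m) := by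
  rw [phimDyadic_eq]
  exact nice_modDil (two_zpow_pos m) _ (nice_schwartz φ)

lemma conv_psi_phim_psi (φ : SchwartzMap ℝ ℂ)
    (hφ : Function.support (𝓕 ⇑φ) ⊆ Set.Ioo 0 1) (Φ : SchwartzMap ℝ ℂ)
    (hΦsupp : Function.support (𝓕 ⇑Φ) ⊆ Set.Icc (-2) 2)
    (hΦone : ∀ ξ ∈ Set.Icc (-(3/2) : ℝ) (3/2), 𝓕 ⇑Φ ξ = 1) (m : ℤ) (hm : m ≤ -2) :
    conv (conv (psi Φ 0) (phimDyadic φ m)) (psi Φ 0) = phimDyadic φ m := by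
  have hp := nice_psi Φ 0
  have hq := nice_phim φ m
  refine eq_of_fourier_eq ((hp.conv hq).conv hp) hq fun ξ => ?_
  rw [fourier_conv (hp.conv hq).int hp.int, fourier_conv hp.int hq.int]
  by_cases h : 𝓕 (phimDyadic φ m) ξ = 0
  · rw [h]; simp
  · have h' := h
    rw [phimDyadic_eq, fourier_modDil (two_zpow_pos m)] at h'
    obtain ⟨a, b⟩ := hφ h'
    have hpos := two_zpow_pos m
    rw [lt_div_iff₀ hpos] at a
    rw [div_lt_iff₀ hpos] at b
    have : (2:ℝ) ^ m ≤ 2 ^ (-2:ℤ) := zpow_le_zpow_right₀ (by norm_num) hm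
    norm_num at this
    rw [fourier_psi_zero_eq_one Φ hΦsupp hΦone ξ ⟨by linarith, by linarith⟩]
    simp

lemma conv_heav_phim (φ : SchwartzMap ℝ ℂ) (m : ℤ) :
    conv heav (phimDyadic φ m) 0 = ∫ t in Set.Iic (0:ℝ), e2pi t * φ t := by
  have hpos := two_zpow_pos m
  set a : ℝ := 2 ^ m with ha
  rw [← integral_indicator measurableSet_Iic]
  have h := Measure.integral_comp_mul_left
    ((Set.Iic (0:ℝ)).indicator fun t => e2pi t * φ t) (-a)
  have h2 : ∀ t, heav t * phimDyadic φ m (0 - t) =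
      (a : ℂ) * ((Set.Iic (0:ℝ)).indicator (fun t => e2pi t * φ t) (-a * t)) := by
    intro t
    by_cases ht : 0 ≤ t
    · have h3 : -a * t ∈ Set.Iic (0:ℝ) := by
        have := mul_nonneg hpos.le ht
        simp only [Set.mem_Iic]; linarith
      rw [Set.indicator_of_mem h3, heav, Set.indicator_of_mem (show t ∈ Set.Ici (0:ℝ) from ht),
        phimDyadic, ← ha]
      have e1 : -a * t = t + (1 + a) * (0 - t) := by ring
      have e2 : a * (0 - t) = -a * t := by ring
      rw [e2]
      have e3 : e2pi (-a * t) = e2pi t * e2pi ((1 + a) * (0 - t)) := by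
        rw [← e2pi_add, ← e1]
      rw [e3]; ring
    · have h3 : -a * t ∉ Set.Iic (0:ℝ) := by
        have := mul_pos hpos (neg_pos.2 (not_le.1 ht))
        simp only [Set.mem_Iic]; linarith
      rw [Set.indicator_of_notMem h3, heav, Set.indicator_of_notMem (by simpa using ht)]
      simp
  rw [conv]
  simp_rw [h2]
  rw [integral_const_mul, h, inv_neg, abs_neg, abs_of_pos (inv_pos.2 hpos), Complex.real_smul, ← mul_assoc]
  rw [← Complex.ofReal_mul, mul_inv_cancel₀ hpos.ne']
  simp

lemma conv_full (φ : SchwartzMap ℝ ℂ)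
    (hφ : Function.support (𝓕 ⇑φ) ⊆ Set.Ioo 0 1) (Φ : SchwartzMap ℝ ℂ)
    (hΦsupp : Function.support (𝓕 ⇑Φ) ⊆ Set.Icc (-2) 2)
    (hΦone : ∀ ξ ∈ Set.Icc (-(3/2) : ℝ) (3/2), 𝓕 ⇑Φ ξ = 1) (m : ℤ) (hm : m ≤ -2) :
    conv (conv (conv heav (psi Φ 0)) (phimDyadic φ m)) (psi Φ 0) 0
      = ∫ t in Set.Iic (0:ℝ), e2pi t * φ t := by
  have hp := nice_psi Φ 0
  have hq := nice_phim φ m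
  rw [conv_assoc_of_bdd measurable_heav norm_heav_le hp hq,
    conv_assoc_of_bdd measurable_heav norm_heav_le (hp.conv hq) hp,
    conv_psi_phim_psi φ hφ Φ hΦsupp hΦone m hm, conv_heav_phim]

lemma eLpNorm_conv_lt_top (Φ : SchwartzMap ℝ ℂ) (j : ℤ) :
    eLpNorm (conv (conv heav (psi ⇑Φ 0)) (psi ⇑Φ j)) ⊤ volume < ∞ := by
  have hb := conv_bound (conv_bound norm_heav_le (nice_psi Φ 0).int) (nice_psi Φ j).int
  rw [eLpNorm_exponent_top]
  exact (eLpNormEssSup_le_of_ae_bound (Filter.Eventually.of_forall hb)).trans_lt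
    ENNReal.ofReal_lt_top

/-- let `φ` be a non-degenerate Schwartz function with `supp 𝓕φ ⊆ (0,1)` and let
`Φ` be Schwartz with `supp 𝓕Φ ⊆ [-2,2]` and `𝓕Φ ≡ 1` on `[-3/2,3/2]`, with Littlewood–Paley
blocks `ψ_j`, and set `f₀ = h∗ψ₀`. Then (a) `f₀∗ψ_j = 0` for `|j| ≥ 2`, and the homogeneous
Besov quasinorm of `f₀` with indices `(∞, q, s)` is finite for all `s ≥ 0`, `0 < q ≤ ∞`;
(b) `sup_x (Σ_{m ≤ -2} |((f₀∗φ_m)∗ψ₀)(x)|²)^{1/2} = ∞`. -/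
theorem statement19 (φ : SchwartzMap ℝ ℂ)
    (hφ : Function.support (𝓕 ⇑φ) ⊆ Set.Ioo 0 1)
    (hnd : (∫ t in Set.Iic (0:ℝ), e2pi t * φ t) ≠ 0)
    (Φ : SchwartzMap ℝ ℂ)
    (hΦsupp : Function.support (𝓕 ⇑Φ) ⊆ Set.Icc (-2) 2)
    (hΦone : ∀ ξ ∈ Set.Icc (-(3/2) : ℝ) (3/2), 𝓕 ⇑Φ ξ = 1) :
    ((∀ j : ℤ, 2 ≤ |j| → ∀ x : ℝ, conv (conv heav (psi ⇑Φ 0)) (psi ⇑Φ j) x = 0) ∧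
      ∀ s : ℝ, 0 ≤ s → ∀ q : ℝ≥0∞, 0 < q →
        lqNorm q (fun j : ℤ => (2 : ℝ≥0∞) ^ ((j : ℝ) * s) *
          eLpNorm (conv (conv heav (psi ⇑Φ 0)) (psi ⇑Φ j)) ⊤ volume) < ∞) ∧
    (⨆ x : ℝ, (∑' m : {m : ℤ // m ≤ -2},
        (‖conv (conv (conv heav (psi ⇑Φ 0)) (phimDyadic ⇑φ (m : ℤ))) (psi ⇑Φ 0) x‖₊ : ℝ≥0∞) ^ 2)
          ^ (1/2 : ℝ)) = ∞ := by
  have hzero : ∀ j : ℤ, 2 ≤ |j| → ∀ x : ℝ,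
      conv (conv heav (psi ⇑Φ 0)) (psi ⇑Φ j) x = 0 := by
    intro j hj x
    rw [conv_assoc_of_bdd measurable_heav norm_heav_le (nice_psi Φ 0) (nice_psi Φ j),
      conv_psi_psi_eq_zero Φ hΦsupp hΦone j hj]
    simp [conv]
  refine ⟨⟨hzero, ?_⟩, ?_⟩
  · intro s _ q hq
    set F : ℤ → ℝ≥0∞ := fun j : ℤ => (2 : ℝ≥0∞) ^ ((j : ℝ) * s) *
          eLpNorm (conv (conv heav (psi ⇑Φ 0)) (psi ⇑Φ j)) ⊤ volume with hF
    have hfin : ∀ j, F j < ∞ := fun j => ENNReal.mul_lt_top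
      (ENNReal.rpow_ne_top_of_ne_zero (by simp) (by simp)).lt_top (eLpNorm_conv_lt_top Φ j)
    have hz : ∀ j, j ∉ Finset.Icc (-1 : ℤ) 1 → F j = 0 := by
      intro j hj
      have hj2 : 2 ≤ |j| := by
        rw [Finset.mem_Icc, ← abs_le] at hj
        omega
      have : conv (conv heav (psi ⇑Φ 0)) (psi ⇑Φ j) = 0 := funext (hzero j hj2)
      simp [hF, this]
    unfold lqNorm
    split_ifs with hqt
    · have hle : (⨆ j, F j) ≤ ∑ j ∈ Finset.Icc (-1 : ℤ) 1, F j := by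
        refine iSup_le fun j => ?_
        by_cases hj : j ∈ Finset.Icc (-1 : ℤ) 1
        · exact Finset.single_le_sum (f := F) (fun _ _ => zero_le) hj
        · rw [hz j hj]; exact zero_le
      exact hle.trans_lt (ENNReal.sum_lt_top.2 fun j _ => hfin j)
    · have hq' : 0 < q.toReal := ENNReal.toReal_pos hq.ne' hqt
      rw [tsum_eq_sum (s := Finset.Icc (-1 : ℤ) 1)
        (fun j hj => by rw [hz j hj, ENNReal.zero_rpow_of_pos hq'])]
      refine ENNReal.rpow_lt_top_of_nonneg (by positivity) (ENNReal.sum_lt_top.2 fun j _ => ?_).ne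
      exact ENNReal.rpow_lt_top_of_nonneg hq'.le (hfin j).ne
  · rw [eq_top_iff]
    refine le_trans ?_ (le_iSup _ (0 : ℝ))
    have hinf : Infinite {m : ℤ // m ≤ -2} := Set.infinite_coe_iff.2 (Set.Iic_infinite (-2 : ℤ))
    have hs : (∑' m : {m : ℤ // m ≤ -2},
        (‖conv (conv (conv heav (psi ⇑Φ 0)) (phimDyadic ⇑φ (m : ℤ))) (psi ⇑Φ 0) 0‖₊ : ℝ≥0∞) ^ 2)
          = ∞ := by
      have : ∀ m : {m : ℤ // m ≤ -2},
        (‖conv (conv (conv heav (psi ⇑Φ 0)) (phimDyadic ⇑φ (m : ℤ))) (psi ⇑Φ 0) 0‖₊ : ℝ≥0∞) ^ 2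
          = (‖∫ t in Set.Iic (0:ℝ), e2pi t * φ t‖₊ : ℝ≥0∞) ^ 2 := fun m => by
        rw [conv_full φ hφ Φ hΦsupp hΦone m m.2]
      rw [tsum_congr this]
      exact ENNReal.tsum_const_eq_top_of_ne_zero (by simpa using hnd)
    rw [hs, ENNReal.top_rpow_of_pos (by norm_num)]
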